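/- arXiv:1601.02717 — 2 statements merged into one kernel-verified Lean document; each statement's English description precedes it below -/
import Mathlib

section
/- Suppose there is a constant C₀ > 0 such that a(w,w) ≥ C₀·‖w‖²_{L²(Ω̄)} for every w ∈ L²(Ω̄) with ∫_{Ω̄} w(x) dx = 0 (a nonlocal Poincaré inequality), and set ϱ = |Ω_I|/|Ω̄|. Then every u ∈ L²(Ω̄) with ∫_{Ω_I} u(x) dx = 0 satisfies a(u,u) ≥ (ϱ/(1 + √(1−ϱ)))·C₀·‖u‖²_{L²(Ω̄)}. -/
open MeasureTheory

/-- The nonlocal bilinear form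
`a(u,v) = ∫_D ∫_D γ(x,y) (u x - u y) (v x - v y) dy dx`. -/
noncomputable def aform {n : ℕ} (D : Set (EuclideanSpace ℝ (Fin n)))
    (γ : EuclideanSpace ℝ (Fin n) → EuclideanSpace ℝ (Fin n) → ℝ)
    (u v : EuclideanSpace ℝ (Fin n) → ℝ) : ℝ :=
  ∫ x in D, ∫ y in D, γ x y * (u x - u y) * (v x - v y)

/-!
The form `a` does not see constants, so the Poincaré inequality applied to `u` minus its mean gives
`a(u,u) ≥ C₀ (‖u‖² - (∫ u)² / |Ω̄|)`. As `u` integrates to zero over `Ω_I`, its integral is that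
over `Ω`, and Cauchy–Schwarz on `Ω` gives `(∫ u)² ≤ |Ω| ‖u‖² = (1 - ϱ) |Ω̄| ‖u‖²`. Hence
`a(u,u) ≥ ϱ C₀ ‖u‖²`, which is stronger than the claim by the factor `1 + √(1 - ϱ) ≥ 1`.
-/

section Average

variable {α : Type*} [MeasurableSpace α] {μ : Measure α} [IsFiniteMeasure μ] {u : α → ℝ}

lemma integral_sub_average_sq (hu : MemLp u 2 μ) :
    ∫ x, (u x - ⨍ y, u y ∂μ) ^ 2 ∂μ =
      ∫ x, u x ^ 2 ∂μ - (∫ x, u x ∂μ) ^ 2 / μ.real Set.univ := by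
  set c := ⨍ y, u y ∂μ with hc
  have hlin : Integrable (fun x ↦ 2 * c * u x) μ := (hu.integrable one_le_two).const_mul _
  have hmean : c = (∫ x, u x ∂μ) / μ.real Set.univ := by
    rw [hc, average_eq, smul_eq_mul, inv_mul_eq_div]
  calc ∫ x, (u x - c) ^ 2 ∂μ
      = ∫ x, (u x ^ 2 - 2 * c * u x + c ^ 2) ∂μ := by congr with x; ring
    _ = ∫ x, u x ^ 2 ∂μ - 2 * c * ∫ x, u x ∂μ + μ.real Set.univ * c ^ 2 := by
      rw [integral_add (by exact hu.integrable_sq.sub hlin) (integrable_const _),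
        integral_sub hu.integrable_sq hlin, integral_const_mul, integral_const, smul_eq_mul]
    _ = ∫ x, u x ^ 2 ∂μ - (∫ x, u x ∂μ) ^ 2 / μ.real Set.univ := by
      rw [hmean]
      rcases eq_or_ne (μ.real Set.univ) 0 with hzero | hne
      · simp [hzero]
      · field_simp
        ring

lemma sq_integral_le_measureReal_univ_mul (hu : MemLp u 2 μ) :
    (∫ x, u x ∂μ) ^ 2 ≤ μ.real Set.univ * ∫ x, u x ^ 2 ∂μ := by
  rcases eq_zero_or_neZero μ with rfl | _
  · simp
  have hvar : 0 ≤ ∫ x, (u x - ⨍ y, u y ∂μ) ^ 2 ∂μ := integral_nonneg fun _ ↦ sq_nonneg _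
  rw [integral_sub_average_sq hu, sub_nonneg, div_le_iff₀' measureReal_univ_pos] at hvar
  exact hvar

lemma sq_integral_le_measureReal_compl_mul {s : Set α} (hs : MeasurableSet s) (hu : MemLp u 2 μ)
    (hzero : ∫ x in s, u x ∂μ = 0) :
    (∫ x, u x ∂μ) ^ 2 ≤ μ.real sᶜ * ∫ x, u x ^ 2 ∂μ := by
  calc (∫ x, u x ∂μ) ^ 2 = (∫ x in sᶜ, u x ∂μ) ^ 2 := by
        rw [← integral_add_compl hs (hu.integrable one_le_two), hzero, zero_add]
    _ ≤ μ.real sᶜ * ∫ x in sᶜ, u x ^ 2 ∂μ := by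
        simpa only [measureReal_restrict_apply_univ] using
          sq_integral_le_measureReal_univ_mul (hu.restrict sᶜ)
    _ ≤ μ.real sᶜ * ∫ x, u x ^ 2 ∂μ :=
        mul_le_mul_of_nonneg_left
          (setIntegral_le_integral hu.integrable_sq (.of_forall fun _ ↦ sq_nonneg _))
          measureReal_nonneg

lemma measureReal_div_mul_integral_sq_le_integral_sub_average_sq [NeZero μ] {s : Set α}
    (hs : MeasurableSet s) (hu : MemLp u 2 μ) (hzero : ∫ x in s, u x ∂μ = 0) :
    μ.real s / μ.real Set.univ * ∫ x, u x ^ 2 ∂μ ≤ ∫ x, (u x - ⨍ y, u y ∂μ) ^ 2 ∂μ := by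
  have hpos : 0 < μ.real Set.univ := measureReal_univ_pos
  calc μ.real s / μ.real Set.univ * ∫ x, u x ^ 2 ∂μ
      = ∫ x, u x ^ 2 ∂μ - μ.real sᶜ * (∫ x, u x ^ 2 ∂μ) / μ.real Set.univ := by
        rw [measureReal_compl hs]
        field_simp
        ring
    _ ≤ ∫ x, u x ^ 2 ∂μ - (∫ x, u x ∂μ) ^ 2 / μ.real Set.univ := by
        gcongr
        exact sq_integral_le_measureReal_compl_mul hs hu hzero
    _ = ∫ x, (u x - ⨍ y, u y ∂μ) ^ 2 ∂μ := (integral_sub_average_sq hu).symm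

end Average

lemma aform_sub_const {n : ℕ} (D : Set (EuclideanSpace ℝ (Fin n)))
    (γ : EuclideanSpace ℝ (Fin n) → EuclideanSpace ℝ (Fin n) → ℝ)
    (u v : EuclideanSpace ℝ (Fin n) → ℝ) (b c : ℝ) :
    aform D γ (fun x ↦ u x - b) (fun x ↦ v x - c) = aform D γ u v := by
  simp only [aform, sub_sub_sub_cancel_right]

theorem stmt6_general {α : Type*} [MeasurableSpace α] {μ : Measure α} {D s : Set α}
    (hs : MeasurableSet s) (hsD : s ⊆ D) (hD_ne_zero : μ D ≠ 0) (hD_ne_top : μ D ≠ ⊤)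
    {a : (α → ℝ) → ℝ} (ha : ∀ w c, a (fun x ↦ w x - c) = a w) {C₀ : ℝ} (hC₀ : 0 ≤ C₀)
    (hpoincare : ∀ w : α → ℝ, MemLp w 2 (μ.restrict D) → ∫ x in D, w x ∂μ = 0 →
      C₀ * ∫ x in D, w x ^ 2 ∂μ ≤ a w)
    {u : α → ℝ} (hu : MemLp u 2 (μ.restrict D)) (hzero : ∫ x in s, u x ∂μ = 0) :
    μ.real s / μ.real D * C₀ * ∫ x in D, u x ^ 2 ∂μ ≤ a u := by
  have : IsFiniteMeasure (μ.restrict D) := isFiniteMeasure_restrict.2 hD_ne_top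
  have : NeZero (μ.restrict D) := ⟨Measure.restrict_eq_zero.not.2 hD_ne_zero⟩
  have hzero_restrict : ∫ x in s, u x ∂μ.restrict D = 0 := by
    rwa [Measure.restrict_restrict hs, Set.inter_eq_left.2 hsD]
  have hvar := measureReal_div_mul_integral_sq_le_integral_sub_average_sq hs hu hzero_restrict
  rw [measureReal_restrict_apply hs, Set.inter_eq_left.2 hsD,
    measureReal_restrict_apply_univ] at hvar
  calc μ.real s / μ.real D * C₀ * ∫ x in D, u x ^ 2 ∂μ
      = C₀ * (μ.real s / μ.real D * ∫ x in D, u x ^ 2 ∂μ) := by ring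
    _ ≤ C₀ * ∫ x in D, (u x - ⨍ y in D, u y ∂μ) ^ 2 ∂μ := by gcongr
    _ ≤ a fun x ↦ u x - ⨍ y in D, u y ∂μ :=
        hpoincare _ (hu.sub (memLp_const _)) (integral_sub_average _ u)
    _ = a u := ha u _

theorem stmt6 {n : ℕ} (Ω ΩI : Set (EuclideanSpace ℝ (Fin n)))
    (hΩmeas : MeasurableSet Ω) (hΩImeas : MeasurableSet ΩI)
    (hdisj : Disjoint Ω ΩI)
    (hΩbdd : Bornology.IsBounded Ω) (hΩIbdd : Bornology.IsBounded ΩI)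
    (hΩpos : 0 < volume Ω) (hΩIpos : 0 < volume ΩI)
    (γ : EuclideanSpace ℝ (Fin n) → EuclideanSpace ℝ (Fin n) → ℝ)
    (hγmeas : Measurable fun p : EuclideanSpace ℝ (Fin n) × EuclideanSpace ℝ (Fin n) => γ p.1 p.2)
    (hγnonneg : ∀ x y, 0 ≤ γ x y)
    (hγbdd : ∃ M, ∀ x y, γ x y ≤ M)
    -- the nonlocal Poincaré inequality
    (C₀ : ℝ) (hC₀ : 0 < C₀)
    (hpoincare : ∀ w : EuclideanSpace ℝ (Fin n) → ℝ,
      MemLp w 2 (volume.restrict (Ω ∪ ΩI)) → (∫ x in Ω ∪ ΩI, w x) = 0 →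
      aform (Ω ∪ ΩI) γ w w ≥ C₀ * ∫ x in Ω ∪ ΩI, w x ^ 2)
    (ϱ : ℝ) (hϱ : ϱ = (volume ΩI).toReal / (volume (Ω ∪ ΩI)).toReal)
    (u : EuclideanSpace ℝ (Fin n) → ℝ)
    (hu : MemLp u 2 (volume.restrict (Ω ∪ ΩI)))
    (hzero : ∫ x in ΩI, u x = 0) :
    aform (Ω ∪ ΩI) γ u u ≥
      ϱ / (1 + Real.sqrt (1 - ϱ)) * C₀ * ∫ x in Ω ∪ ΩI, u x ^ 2 := by
  have hD_ne_zero : volume (Ω ∪ ΩI) ≠ 0 :=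
    (hΩpos.trans_le (measure_mono Set.subset_union_left)).ne'
  have hϱ_nonneg : 0 ≤ ϱ := hϱ ▸ by positivity
  calc ϱ / (1 + Real.sqrt (1 - ϱ)) * C₀ * ∫ x in Ω ∪ ΩI, u x ^ 2
      ≤ ϱ * C₀ * ∫ x in Ω ∪ ΩI, u x ^ 2 := by
        gcongr
        exact div_le_self hϱ_nonneg (le_add_of_nonneg_right (Real.sqrt_nonneg _))
    _ ≤ aform (Ω ∪ ΩI) γ u u := hϱ ▸ stmt6_general (a := fun w ↦ aform (Ω ∪ ΩI) γ w w) hΩImeas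
        Set.subset_union_right hD_ne_zero (hΩbdd.union hΩIbdd).measure_lt_top.ne
        (fun w c ↦ aform_sub_const _ γ w w c c) hC₀.le hpoincare hu hzero
end

section
/- Suppose γ is symmetric (γ(x,y) = γ(y,x)) and let f ∈ L²(Ω). Let u ∈ L²(Ω̄) vanish almost everywhere on Ω_I and satisfy a(u,v) = ∫_Ω v(x)·f(x) dx for every v ∈ L²(Ω̄) that vanishes almost everywhere on Ω_I. Then u satisfies the Fredholm equation σ(x)·u(x) − ∫_Ω γ(x,y)·u(y) dy = f(x)/2 for almost every x ∈ Ω, where σ(x) = ∫_{Ω̄} γ(x,y) dy. -/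
open MeasureTheory

/-!
Write `L u x = ∫ γ(x,y) (u x - u y) dy`. For symmetric `γ` the integrand `γ(x,y) (u x - u y)` is
antisymmetric, so exchanging `x` and `y` in half of `a(u,v)` gives the Green identity
`a(u,v) = 2 ∫ v L u`. Testing the weak equation with indicators of subsets of `Ω` therefore yields
`2 L u = f` almost everywhere on `Ω`, and `L u = σ u - ∫_Ω γ(·,y) u y dy` because `u` vanishes off
`Ω`.
-/

section Nonlocal

open scoped ENNReal

variable {X : Type*} [MeasurableSpace X]

/-- The nonlocal bilinear form `∬ γ(x,y) (u x - u y) (v x - v y)` over an arbitrary measure;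
`aform D` is the case of Lebesgue measure restricted to `D`. -/
noncomputable def nonlocalForm (μ : Measure X) (γ : X → X → ℝ) (u v : X → ℝ) : ℝ :=
  ∫ x, ∫ y, γ x y * (u x - u y) * (v x - v y) ∂μ ∂μ

/-- The nonlocal operator `L u x = ∫ γ(x,y) (u x - u y) dy`, normalised so that the form it
represents is half of `nonlocalForm`. -/
noncomputable def nonlocalOperator (μ : Measure X) (γ : X → X → ℝ) (u : X → ℝ) (x : X) : ℝ :=
  ∫ y, γ x y * (u x - u y) ∂μ

variable {μ : Measure X} {γ : X → X → ℝ} {u v : X → ℝ}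

lemma integrable_kernel_mul_fst_of_bound [IsFiniteMeasure μ] {M : ℝ}
    (hγ : AEStronglyMeasurable (fun p : X × X => γ p.1 p.2) (μ.prod μ))
    (hM : ∀ x y, ‖γ x y‖ ≤ M) (hu : Integrable u μ) :
    Integrable (fun p : X × X => γ p.1 p.2 * u p.1) (μ.prod μ) :=
  (hu.comp_fst μ).bdd_mul hγ (.of_forall fun p => hM p.1 p.2)

variable [SFinite μ]

lemma integrable_kernel_mul_snd (hγsymm : ∀ x y, γ x y = γ y x)
    (hγu : Integrable (fun p : X × X => γ p.1 p.2 * u p.1) (μ.prod μ)) :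
    Integrable (fun p : X × X => γ p.1 p.2 * u p.2) (μ.prod μ) :=
  hγu.swap.congr (.of_forall fun p => congrArg (· * u p.2) (hγsymm p.2 p.1))

lemma integrable_kernel_mul_sub (hγsymm : ∀ x y, γ x y = γ y x)
    (hγu : Integrable (fun p : X × X => γ p.1 p.2 * u p.1) (μ.prod μ)) :
    Integrable (fun p : X × X => γ p.1 p.2 * (u p.1 - u p.2)) (μ.prod μ) := by
  simp only [mul_sub]
  exact hγu.sub (integrable_kernel_mul_snd hγsymm hγu)

lemma integrable_nonlocalOperator (hγsymm : ∀ x y, γ x y = γ y x)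
    (hγu : Integrable (fun p : X × X => γ p.1 p.2 * u p.1) (μ.prod μ)) :
    Integrable (nonlocalOperator μ γ u) μ :=
  (integrable_kernel_mul_sub hγsymm hγu).integral_prod_left

lemma nonlocalOperator_ae_eq (hγsymm : ∀ x y, γ x y = γ y x)
    (hγu : Integrable (fun p : X × X => γ p.1 p.2 * u p.1) (μ.prod μ)) :
    ∀ᵐ x ∂μ, nonlocalOperator μ γ u x = (∫ y, γ x y ∂μ) * u x - ∫ y, γ x y * u y ∂μ := by
  filter_upwards [hγu.prod_right_ae, (integrable_kernel_mul_snd hγsymm hγu).prod_right_ae]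
    with x hux huy
  simp only [nonlocalOperator, mul_sub]
  rw [integral_sub hux huy, integral_mul_const]

lemma nonlocalForm_eq_two_mul_integral (hγsymm : ∀ x y, γ x y = γ y x)
    (h : Integrable (fun p : X × X => γ p.1 p.2 * (u p.1 - u p.2) * v p.1) (μ.prod μ)) :
    nonlocalForm μ γ u v = 2 * ∫ x, nonlocalOperator μ γ u x * v x ∂μ := by
  have antisymm (x y : X) : γ y x * (u y - u x) * v x = -(γ x y * (u x - u y) * v x) := by
    rw [hγsymm y x]; ring
  have h_snd : Integrable (fun p : X × X => γ p.1 p.2 * (u p.1 - u p.2) * v p.2) (μ.prod μ) :=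
    h.swap.neg.congr (.of_forall fun p => (antisymm p.2 p.1).symm)
  have swapped : ∫ x, ∫ y, γ x y * (u x - u y) * v y ∂μ ∂μ
      = -∫ x, ∫ y, γ x y * (u x - u y) * v x ∂μ ∂μ := by
    rw [integral_integral_swap h_snd]
    simp only [antisymm, ← integral_neg]
  calc nonlocalForm μ γ u v
      = ∫ x, ∫ y, γ x y * (u x - u y) * v x - γ x y * (u x - u y) * v y ∂μ ∂μ := by
        simp only [nonlocalForm, mul_sub]
    _ = (∫ x, ∫ y, γ x y * (u x - u y) * v x ∂μ ∂μ)
          - ∫ x, ∫ y, γ x y * (u x - u y) * v y ∂μ ∂μ := integral_integral_sub' h h_snd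
    _ = 2 * ∫ x, ∫ y, γ x y * (u x - u y) * v x ∂μ ∂μ := by rw [swapped]; ring
    _ = 2 * ∫ x, nonlocalOperator μ γ u x * v x ∂μ := by
        simp only [nonlocalOperator, integral_mul_const]

lemma nonlocalForm_indicator_one (hγsymm : ∀ x y, γ x y = γ y x)
    (hγu : Integrable (fun p : X × X => γ p.1 p.2 * u p.1) (μ.prod μ))
    {S : Set X} (hS : MeasurableSet S) :
    nonlocalForm μ γ u (S.indicator 1) = 2 * ∫ x in S, nonlocalOperator μ γ u x ∂μ := by
  have h : Integrable
      (fun p : X × X => γ p.1 p.2 * (u p.1 - u p.2) * S.indicator 1 p.1) (μ.prod μ) := by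
    refine ((integrable_kernel_mul_sub hγsymm hγu).indicator (measurable_fst hS)).congr
      (.of_forall fun p => ?_)
    by_cases hp : p.1 ∈ S <;> simp [hp]
  rw [nonlocalForm_eq_two_mul_integral hγsymm h, ← integral_indicator hS]
  simp only [← Set.indicator_mul_right, Pi.one_apply, mul_one]

variable {Ω ΩI : Set X} {f : X → ℝ}

lemma two_mul_nonlocalOperator_ae_eq_of_weak (hΩ : MeasurableSet Ω) (hdisj : AEDisjoint μ Ω ΩI)
    (hγsymm : ∀ x y, γ x y = γ y x) (hf : IntegrableOn f Ω μ)
    (hγu : Integrable (fun p : X × X => γ p.1 p.2 * u p.1)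
      ((μ.restrict (Ω ∪ ΩI)).prod (μ.restrict (Ω ∪ ΩI))))
    (hweak : ∀ v : X → ℝ, MemLp v ∞ (μ.restrict (Ω ∪ ΩI)) → (∀ᵐ x ∂μ.restrict ΩI, v x = 0) →
      nonlocalForm (μ.restrict (Ω ∪ ΩI)) γ u v = ∫ x in Ω, v x * f x ∂μ) :
    ∀ᵐ x ∂μ.restrict Ω, 2 * nonlocalOperator (μ.restrict (Ω ∪ ΩI)) γ u x = f x := by
  have hL : IntegrableOn (nonlocalOperator (μ.restrict (Ω ∪ ΩI)) γ u) Ω μ :=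
    (integrable_nonlocalOperator hγsymm hγu).mono_measure
      (Measure.restrict_mono_set μ Set.subset_union_left)
  refine Integrable.ae_eq_of_forall_setIntegral_eq _ _ (hL.const_mul 2) hf fun S hS _ => ?_
  have hSΩ : MeasurableSet (S ∩ Ω) := hS.inter hΩ
  have hsub : S ∩ Ω ⊆ Ω ∪ ΩI := Set.inter_subset_right.trans Set.subset_union_left
  have indicator_memLp : MemLp ((S ∩ Ω).indicator 1) ∞ (μ.restrict (Ω ∪ ΩI)) :=
    (memLp_top_const (1 : ℝ)).indicator hSΩ
  have indicator_zero : ∀ᵐ x ∂μ.restrict ΩI, (S ∩ Ω).indicator (1 : X → ℝ) x = 0 := by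
    refine indicator_meas_zero ?_
    rw [Measure.restrict_apply hSΩ]
    exact hdisj.mono Set.inter_subset_right subset_rfl
  calc ∫ x in S, 2 * nonlocalOperator (μ.restrict (Ω ∪ ΩI)) γ u x ∂μ.restrict Ω
      = nonlocalForm (μ.restrict (Ω ∪ ΩI)) γ u ((S ∩ Ω).indicator 1) := by
        rw [nonlocalForm_indicator_one hγsymm hγu hSΩ, integral_const_mul,
          Measure.restrict_restrict hS, Measure.restrict_restrict_of_subset hsub]
    _ = ∫ x in Ω, (S ∩ Ω).indicator 1 x * f x ∂μ := hweak _ indicator_memLp indicator_zero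
    _ = ∫ x in S, f x ∂μ.restrict Ω := by
        simp only [← Set.indicator_mul_left, Pi.one_apply, one_mul]
        rw [integral_indicator hSΩ, Measure.restrict_restrict hSΩ, Measure.restrict_restrict hS,
          Set.inter_assoc, Set.inter_self]

theorem stmt15_general (hΩ : MeasurableSet Ω) (hdisj : AEDisjoint μ Ω ΩI)
    (hγsymm : ∀ x y, γ x y = γ y x) (hf : IntegrableOn f Ω μ)
    (hγu : Integrable (fun p : X × X => γ p.1 p.2 * u p.1)
      ((μ.restrict (Ω ∪ ΩI)).prod (μ.restrict (Ω ∪ ΩI))))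
    (huzero : ∀ᵐ x ∂μ.restrict ΩI, u x = 0)
    (hweak : ∀ v : X → ℝ, MemLp v ∞ (μ.restrict (Ω ∪ ΩI)) → (∀ᵐ x ∂μ.restrict ΩI, v x = 0) →
      nonlocalForm (μ.restrict (Ω ∪ ΩI)) γ u v = ∫ x in Ω, v x * f x ∂μ) :
    ∀ᵐ x ∂μ.restrict Ω,
      (∫ y in Ω ∪ ΩI, γ x y ∂μ) * u x - ∫ y in Ω, γ x y * u y ∂μ = f x / 2 := by
  filter_upwards [two_mul_nonlocalOperator_ae_eq_of_weak hΩ hdisj hγsymm hf hγu hweak,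
    ae_restrict_of_ae_restrict_of_subset Set.subset_union_left
      (nonlocalOperator_ae_eq hγsymm hγu)] with x hLf hL
  have integral_eq : ∫ y in Ω ∪ ΩI, γ x y * u y ∂μ = ∫ y in Ω, γ x y * u y ∂μ :=
    integral_union_eq_left_of_ae (huzero.mono fun y hy => mul_eq_zero_of_right _ hy)
  rw [← integral_eq, ← hL, ← hLf, mul_div_cancel_left₀ _ two_ne_zero]

end Nonlocal

theorem stmt15 {n : ℕ} (Ω ΩI : Set (EuclideanSpace ℝ (Fin n)))
    (hΩmeas : MeasurableSet Ω) (hΩImeas : MeasurableSet ΩI)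
    (hdisj : Disjoint Ω ΩI)
    (hΩbdd : Bornology.IsBounded Ω) (hΩIbdd : Bornology.IsBounded ΩI)
    (hΩpos : 0 < volume Ω) (hΩIpos : 0 < volume ΩI)
    (γ : EuclideanSpace ℝ (Fin n) → EuclideanSpace ℝ (Fin n) → ℝ)
    (hγmeas : Measurable fun p : EuclideanSpace ℝ (Fin n) × EuclideanSpace ℝ (Fin n) => γ p.1 p.2)
    (hγnonneg : ∀ x y, 0 ≤ γ x y)
    (hγbdd : ∃ M, ∀ x y, γ x y ≤ M)
    (hγsymm : ∀ x y, γ x y = γ y x)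
    (f : EuclideanSpace ℝ (Fin n) → ℝ)
    (hf : MemLp f 2 (volume.restrict Ω))
    (u : EuclideanSpace ℝ (Fin n) → ℝ)
    (hu : MemLp u 2 (volume.restrict (Ω ∪ ΩI)))
    (huzero : ∀ᵐ x ∂(volume.restrict ΩI), u x = 0)
    -- the weak formulation: `a(u,v) = ∫_Ω v f` for all `v ∈ L²(Ω̄)` vanishing
    -- a.e. on `Ω_I`
    (hweak : ∀ v : EuclideanSpace ℝ (Fin n) → ℝ,
      MemLp v 2 (volume.restrict (Ω ∪ ΩI)) →
      (∀ᵐ x ∂(volume.restrict ΩI), v x = 0) →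
      aform (Ω ∪ ΩI) γ u v = ∫ x in Ω, v x * f x) :
    -- the Fredholm equation, a.e. on `Ω`, with `σ(x) = ∫_{Ω̄} γ(x,y) dy`
    ∀ᵐ x ∂(volume.restrict Ω),
      (∫ y in Ω ∪ ΩI, γ x y) * u x - (∫ y in Ω, γ x y * u y) = f x / 2 := by
  obtain ⟨M, hM⟩ := hγbdd
  have : IsFiniteMeasure (volume.restrict (Ω ∪ ΩI)) :=
    isFiniteMeasure_restrict.mpr (hΩbdd.union hΩIbdd).measure_lt_top.ne
  have : IsFiniteMeasure (volume.restrict Ω) :=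
    isFiniteMeasure_restrict.mpr hΩbdd.measure_lt_top.ne
  have hγu := integrable_kernel_mul_fst_of_bound hγmeas.aestronglyMeasurable
    (fun x y => (Real.norm_of_nonneg (hγnonneg x y)).trans_le (hM x y))
    (hu.integrable one_le_two)
  exact stmt15_general hΩmeas hdisj.aedisjoint hγsymm (hf.integrable one_le_two) hγu huzero
    fun v hv => hweak v (hv.mono_exponent le_top)
end
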